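/- Let n be a positive integer and p ≥ 3 a prime number. If p ∣ n and n is even, then τ(U_n · U_{n+p} · U_{n+2p}) = (n(n+p)(n+2p)/(2p²)) · (U_p² · V_p / gcd(V_p, (n+p)/p)). -/

import Mathlib

/-- The first Lucas sequence with parameters `(a, b)`:
`U 0 = 0`, `U 1 = 1`, `U (k+2) = a * U (k+1) + b * U k`. -/
def U (a b : ℤ) : ℕ → ℤ
  | 0 => 0
  | 1 => 1
  | (k + 2) => a * U a b (k + 1) + b * U a b k

/-- The second Lucas sequence with parameters `(a, b)`:
`V 0 = 2`, `V 1 = a`, `V (k+2) = a * V (k+1) + b * V k`. -/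
def V (a b : ℤ) : ℕ → ℤ
  | 0 => 2
  | 1 => a
  | (k + 2) => a * V a b (k + 1) + b * V a b k

/-- The order of appearance of `m` in the first Lucas sequence with parameters `(a, b)`:
the smallest positive integer `k` such that `m ∣ U a b k`. -/
noncomputable def tau (a b : ℤ) (m : ℤ) : ℕ :=
  sInf {k : ℕ | 0 < k ∧ m ∣ U a b k}

/-- The pair `(a, b)` is nondegenerate: `b ≠ 0` and
`(a, b) ∉ {(±2, -1), (±1, -1), (0, ±1), (±1, 0)}`. -/
def Nondegenerate (a b : ℤ) : Prop :=
  b ≠ 0 ∧ (a, b) ∉ ({(2, -1), (-2, -1), (1, -1), (-1, -1),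
    (0, 1), (0, -1), (1, 0), (-1, 0)} : Set (ℤ × ℤ))

lemma U_add (a b : ℤ) (i j : ℕ) :
    U a b (i + j + 1) = U a b (i + 1) * U a b (j + 1) + b * U a b i * U a b j := by
  induction j using Nat.twoStepInduction with
  | zero => simp [U]
  | one => simp [U]; ring
  | more j ih₁ ih₂ =>
    rw [show i + (j + 2) + 1 = (i + j + 1) + 2 by ring, U,
      show i + j + 1 + 1 = i + (j + 1) + 1 by ring, ih₁, ih₂]
    simp only [U]
    ring

lemma V_eq (a b : ℤ) (k : ℕ) : V a b k = 2 * U a b (k + 1) - a * U a b k := by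
  induction k using Nat.twoStepInduction with
  | zero => simp [U, V]
  | one => simp [U, V]; ring
  | more k ih₁ ih₂ => rw [V, ih₁, ih₂]; simp only [U]; ring

lemma U_two_mul (a b : ℤ) (k : ℕ) : U a b (2 * k) = U a b k * V a b k := by
  rcases k with _ | k
  · simp [U]
  · rw [show 2 * (k + 1) = (k + 1) + k + 1 by ring, U_add, V_eq]
    simp only [U]
    ring

lemma U_norm (a b : ℤ) (k : ℕ) :
    U a b (k + 1) ^ 2 - a * U a b k * U a b (k + 1) - b * U a b k ^ 2 = (-b) ^ k := by
  induction k with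
  | zero => simp [U]
  | succ k ih => rw [pow_succ (-b), ← ih]; simp only [U]; ring

lemma V_two_mul (a b : ℤ) (k : ℕ) : V a b (2 * k) = V a b k ^ 2 - 2 * (-b) ^ k := by
  rw [V_eq, U_two_mul, show 2 * k + 1 = k + k + 1 by ring, U_add, V_eq, ← U_norm a b k]
  ring

lemma isCoprime_U_succ_right {a b : ℤ} (hab : IsCoprime a b) (k : ℕ) :
    IsCoprime (U a b (k + 1)) b := by
  induction k with
  | zero => simpa [U] using isCoprime_one_left
  | succ k ih =>
    rw [U]
    exact (IsCoprime.add_mul_left_left_iff).2 (hab.mul_left ih)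

lemma isCoprime_U_succ {a b : ℤ} (hab : IsCoprime a b) (k : ℕ) :
    IsCoprime (U a b k) (U a b (k + 1)) := by
  induction k with
  | zero => simpa [U] using isCoprime_one_right
  | succ k ih =>
    rw [U, add_comm (a * _), mul_comm a]
    exact (IsCoprime.add_mul_left_right_iff).2
      ((isCoprime_U_succ_right hab k).mul_right ih.symm)

lemma U_dvd_mul (a b : ℤ) (d k : ℕ) : U a b d ∣ U a b (d * k) := by
  rcases d with _ | d
  · simp [U]
  induction k with
  | zero => simp [U]
  | succ k ih =>
    rw [show (d + 1) * (k + 1) = (d + 1) * k + d + 1 by ring, U_add]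
    exact dvd_add (Dvd.intro_left _ rfl) (((ih.mul_left b)).mul_right _)

lemma U_dvd_of_dvd (a b : ℤ) {d k : ℕ} (h : d ∣ k) : U a b d ∣ U a b k := by
  obtain ⟨k, rfl⟩ := h
  exact U_dvd_mul a b d k

lemma dvd_U_add_iff {a b x : ℤ} (hab : IsCoprime a b) {i j : ℕ} (hi : x ∣ U a b i) :
    x ∣ U a b (i + j) ↔ x ∣ U a b j := by
  rcases j with _ | j
  · simp [U, hi]
  have hx : IsCoprime x (U a b (i + 1)) := (isCoprime_U_succ hab i).of_isCoprime_of_dvd_left hi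
  rw [← add_assoc, U_add, dvd_add_left ((hi.mul_left b).mul_right _)]
  exact ⟨hx.dvd_of_dvd_mul_left, fun h => h.mul_left _⟩

lemma dvd_U_gcd {a b x : ℤ} (hab : IsCoprime a b) {i j : ℕ}
    (hi : x ∣ U a b i) (hj : x ∣ U a b j) : x ∣ U a b (i.gcd j) := by
  induction i, j using Nat.gcd.induction with
  | H0 j => simpa using hj
  | H1 i j _ ih =>
    rw [Nat.gcd_rec]
    refine ih ?_ hi
    rw [← Nat.div_add_mod j i] at hj
    exact (dvd_U_add_iff hab (hi.trans (U_dvd_mul a b i _))).1 hj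

lemma U_growth {a b : ℤ} (ha : 0 < a) (hΔ : 0 < a ^ 2 + 4 * b) (k : ℕ) :
    0 < U a b (k + 1) ∧ a * U a b (k + 1) ≤ 2 * U a b (k + 2) := by
  induction k with
  | zero => simp [U]; omega
  | succ k ih =>
    obtain ⟨h₁, h₂⟩ := ih
    have h₃ : 0 < U a b (k + 2) := by nlinarith
    refine ⟨h₃, ?_⟩
    rw [show k + 1 + 2 = (k + 1) + 2 from rfl, U]
    change a * U a b (k + 2) ≤ 2 * (a * U a b (k + 2) + b * U a b (k + 1))
    nlinarith [mul_pos hΔ h₁]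

lemma U_pos {a b : ℤ} (ha : 0 < a) (hΔ : 0 < a ^ 2 + 4 * b) {k : ℕ} (hk : 0 < k) :
    0 < U a b k := by
  obtain ⟨k, rfl⟩ := Nat.exists_eq_succ_of_ne_zero hk.ne'
  exact (U_growth ha hΔ k).1

lemma V_pos {a b : ℤ} (ha : 0 < a) (hΔ : 0 < a ^ 2 + 4 * b) {k : ℕ} (hk : 0 < k) :
    0 < V a b k := by
  have h : 0 < U a b (2 * k) := U_pos ha hΔ (by omega)
  rw [U_two_mul] at h
  exact pos_of_mul_pos_right h (U_pos ha hΔ hk).le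

lemma U_lt_succ {a b : ℤ} (ha : 0 < a) (hΔ : 0 < a ^ 2 + 4 * b) (hb : b ≠ 0) (k : ℕ) :
    U a b (k + 2) < U a b (k + 3) := by
  obtain ⟨h₁, h₂⟩ := U_growth ha hΔ k
  obtain ⟨h₃, h₄⟩ := U_growth ha hΔ (k + 1)
  change 0 < U a b (k + 2) at h₃
  change a * U a b (k + 2) ≤ 2 * U a b (k + 3) at h₄
  rcases lt_or_gt_of_ne hb with hb | hb
  · have : 3 ≤ a := by nlinarith
    nlinarith
  · have : U a b (k + 3) = a * U a b (k + 2) + b * U a b (k + 1) := rfl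
    nlinarith [mul_pos hb h₁]

lemma U_lt_U {a b : ℤ} (ha : 0 < a) (hΔ : 0 < a ^ 2 + 4 * b) (hb : b ≠ 0) {i j : ℕ}
    (hj : 3 ≤ j) (hij : i < j) : U a b i < U a b j := by
  have hmono : StrictMono fun k => U a b (k + 2) := strictMono_nat_of_lt_succ (U_lt_succ ha hΔ hb)
  obtain ⟨j, rfl⟩ := Nat.exists_eq_add_of_le' (show 2 ≤ j by omega)
  have h₁ : 1 ≤ U a b 2 := U_pos ha hΔ (by norm_num)
  have h₂ : U a b 2 < U a b (j + 2) := hmono (show 0 < j by omega)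
  rcases i with _ | _ | i
  · exact U_pos ha hΔ (by omega)
  · exact h₁.trans_lt h₂
  · exact hmono (show i < j by omega)

lemma dvd_of_U_dvd {a b : ℤ} (hab : IsCoprime a b) (ha : 0 < a) (hΔ : 0 < a ^ 2 + 4 * b)
    (hb : b ≠ 0) {n k : ℕ} (hn : 3 ≤ n) (h : U a b n ∣ U a b k) : n ∣ k := by
  have hg : 0 < n.gcd k := Nat.gcd_pos_of_pos_left k (by omega)
  have hle := Int.le_of_dvd (U_pos ha hΔ hg) (dvd_U_gcd hab dvd_rfl h)
  have hn' : n ≤ n.gcd k := by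
    by_contra! hlt
    exact (U_lt_U ha hΔ hb hn hlt).not_ge hle
  exact (Nat.le_antisymm (Nat.gcd_le_left k (by omega)) hn') ▸ Nat.gcd_dvd_right n k

lemma exists_U_mul_add_two (a b : ℤ) (d k : ℕ) : ∃ z w : ℤ,
    U a b (d * (k + 2)) = U a b d * ((k + 2) * (U a b (d + 1) - a * U a b d) ^ (k + 1)
      + (k + 2).choose 2 * U a b d * (U a b (d + 1) - a * U a b d) ^ k * a
      + U a b d ^ 2 * z) ∧
    U a b (d * (k + 2) + 1) = (U a b (d + 1) - a * U a b d) ^ (k + 2)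
      + (k + 2) * U a b d * (U a b (d + 1) - a * U a b d) ^ (k + 1) * a + U a b d ^ 2 * w := by
  rcases d with _ | d
  · exact ⟨0, 0, by simp [U]⟩
  have hc : b * U a b d = U a b (d + 1 + 1) - a * U a b (d + 1) := by rw [U]; ring
  have hs : U a b (d + 1 + 1) = (U a b (d + 1 + 1) - a * U a b (d + 1)) + a * U a b (d + 1) := by
    ring
  induction k with
  | zero =>
    refine ⟨0, a ^ 2 + b, ?_, ?_⟩
    · rw [show (d + 1) * (0 + 2) = 2 * (d + 1) by ring, U_two_mul, V_eq,
        show Nat.choose (0 + 2) 2 = 1 from rfl]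
      push_cast; ring
    · rw [show (d + 1) * (0 + 2) + 1 = (d + 1) + (d + 1) + 1 by ring, U_add]
      generalize U a b (d + 1 + 1) - a * U a b (d + 1) = c at *
      rw [hs]
      simp; ring
  | succ k ih =>
    obtain ⟨z, w, hz, hw⟩ := ih
    have h₁ : U a b ((d + 1) * (k + 1 + 2)) = U a b ((d + 1) * (k + 2) + 1) * U a b (d + 1)
        + b * U a b ((d + 1) * (k + 2)) * U a b d := by
      rw [← U_add]; congr 1
    have h₂ : U a b ((d + 1) * (k + 1 + 2) + 1) =
        U a b ((d + 1) * (k + 2) + 1) * U a b (d + 1 + 1)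
          + b * U a b ((d + 1) * (k + 2)) * U a b (d + 1) := by
      rw [← U_add]; congr 1
    have hch : ((k + 1 + 2).choose 2 : ℤ) = (k + 2).choose 2 + (k + 2) := by
      rw [show k + 1 + 2 = (k + 2) + 1 by ring, Nat.choose_succ_succ' (k + 2) 1]
      simp; ring
    generalize U a b (d + 1 + 1) - a * U a b (d + 1) = c at *
    refine ⟨w + z * c, w * c + (k + 2) * c ^ (k + 1) * a * a + a * U a b (d + 1) * w
      + b * ((k + 2) * c ^ (k + 1) + (k + 2).choose 2 * U a b (d + 1) * c ^ k * a
      + U a b (d + 1) ^ 2 * z), ?_, ?_⟩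
    · rw [h₁, mul_right_comm b, hc, hw, hz, hch]; push_cast; ring
    · rw [h₂, hw, hz, hs]; push_cast; ring

section valuation

variable {a b : ℤ} {q : ℕ} [hq : Fact q.Prime]

lemma not_dvd_U_succ (hab : IsCoprime a b) {d : ℕ} (h : (q : ℤ) ∣ U a b d) :
    ¬ (q : ℤ) ∣ U a b (d + 1) := fun h' =>
  (Nat.prime_iff_prime_int.1 hq.out).not_isUnit ((isCoprime_U_succ hab d).isUnit_of_dvd' h h')

lemma padicValInt_V_two_mul (hab : IsCoprime a b) {e : ℕ} (he : 0 < e)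
    (h : (2 : ℤ) ∣ U a b (2 * e)) : padicValInt 2 (V a b (2 * e)) = 1 := by
  have hV : (2 : ℤ) ∣ V a b (2 * e) := by
    rw [V_eq]; exact dvd_sub (dvd_mul_right _ _) (h.mul_left a)
  have hVe : (2 : ℤ) ∣ V a b e := by
    rw [V_two_mul, dvd_sub_left (dvd_mul_right _ _)] at hV
    exact Int.prime_two.dvd_of_dvd_pow hV
  have hb : ¬ (2 : ℤ) ∣ b := fun hb => by
    obtain ⟨k, hk⟩ : ∃ k, 2 * e = k + 1 := ⟨2 * e - 1, by omega⟩
    rw [hk] at h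
    exact Int.prime_two.not_isUnit ((isCoprime_U_succ_right hab k).isUnit_of_dvd' h hb)
  obtain ⟨v, hv⟩ := hVe
  have hodd : ¬ (2 : ℤ) ∣ 2 * v ^ 2 - (-b) ^ e := by
    rw [dvd_sub_right (dvd_mul_right _ _)]
    exact fun h => hb (by simpa using Int.prime_two.dvd_of_dvd_pow h)
  have hfac : V a b (2 * e) = (2 : ℕ) * (2 * v ^ 2 - (-b) ^ e) := by
    rw [V_two_mul, hv]; push_cast; ring
  have hne : 2 * v ^ 2 - (-b) ^ e ≠ 0 := fun h0 => hodd (h0 ▸ dvd_zero _)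
  rw [hfac, padicValInt.mul (by norm_num) hne, padicValInt_self,
    padicValInt.eq_zero_of_not_dvd (by exact_mod_cast hodd)]

lemma padicValInt_U_mul_of_not_dvd (hab : IsCoprime a b) {d k : ℕ} (h : (q : ℤ) ∣ U a b d)
    (hd : U a b d ≠ 0) (hk : ¬ q ∣ k) :
    padicValInt q (U a b (d * k)) = padicValInt q (U a b d) := by
  have hqp := Nat.prime_iff_prime_int.1 hq.out
  rcases k with _ | _ | k
  · simp at hk
  · simp
  obtain ⟨z, _, hz, _⟩ := exists_U_mul_add_two a b d k
  have hc : ¬ (q : ℤ) ∣ U a b (d + 1) - a * U a b d := by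
    rw [dvd_sub_left (h.mul_left a)]; exact not_dvd_U_succ hab h
  generalize U a b (d + 1) - a * U a b d = c at *
  have hndvd : ¬ (q : ℤ) ∣ (k + 2) * c ^ (k + 1) + (k + 2).choose 2 * U a b d * c ^ k * a
      + U a b d ^ 2 * z := by
    rw [dvd_add_left ((h.pow two_ne_zero).mul_right z), dvd_add_left
      (((h.mul_left _).mul_right _).mul_right _)]
    intro h'
    rcases hqp.dvd_or_dvd h' with h' | h'
    · exact hk (by exact_mod_cast h')
    · exact hc (hqp.dvd_of_dvd_pow h')
  change padicValInt q (U a b (d * (k + 2))) = _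
  rw [hz, padicValInt.mul hd (fun h0 => hndvd (by rw [h0]; exact dvd_zero _)),
    padicValInt.eq_zero_of_not_dvd hndvd, add_zero]

lemma padicValInt_U_mul_self (hab : IsCoprime a b) {d : ℕ} (hd0 : 0 < d)
    (h : (q : ℤ) ∣ U a b d) (hU : U a b d ≠ 0) (hd : q = 2 → Even d) :
    padicValInt q (U a b (d * q)) = padicValInt q (U a b d) + 1 := by
  have hqp := Nat.prime_iff_prime_int.1 hq.out
  by_cases hq2 : q = 2
  · subst hq2
    obtain ⟨e, rfl⟩ := (hd rfl).two_dvd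
    have hV := padicValInt_V_two_mul hab (by omega) h
    have hV0 : V a b (2 * e) ≠ 0 := fun h0 => by simp [h0] at hV
    rw [mul_comm, U_two_mul, padicValInt.mul hU hV0, hV]
  have hq3 : 2 < q := lt_of_le_of_ne hq.out.two_le (Ne.symm hq2)
  obtain ⟨k, hk⟩ := Nat.exists_eq_add_of_le' hq.out.two_le
  obtain ⟨z, _, hz, _⟩ := exists_U_mul_add_two a b d k
  have hc : ¬ (q : ℤ) ∣ U a b (d + 1) - a * U a b d := by
    rw [dvd_sub_left (h.mul_left a)]; exact not_dvd_U_succ hab h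
  obtain ⟨y, hy⟩ : (q : ℤ) ∣ ((k + 2).choose 2 : ℤ) := by
    rw [← hk]; exact_mod_cast hq.out.dvd_choose_self two_ne_zero hq3
  generalize U a b (d + 1) - a * U a b d = c at *
  obtain ⟨x, hx⟩ := h
  have hndvd : ¬ (q : ℤ) ∣ c ^ (k + 1) + q * (y * x * c ^ k * a + x ^ 2 * z) := by
    rw [dvd_add_left (dvd_mul_right _ _)]
    exact fun h' => hc (hqp.dvd_of_dvd_pow h')
  have hfac : U a b (d * q) =
      U a b d * (q * (c ^ (k + 1) + q * (y * x * c ^ k * a + x ^ 2 * z))) := by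
    have hk' : (k + 2 : ℤ) = q := by rw [hk]; push_cast; ring
    conv_lhs => rw [hk]
    rw [hz, hk', hy, hx]
    ring
  have hne : c ^ (k + 1) + q * (y * x * c ^ k * a + x ^ 2 * z) ≠ 0 :=
    fun h0 => hndvd (h0 ▸ dvd_zero _)
  have hq0 : (q : ℤ) ≠ 0 := hqp.ne_zero
  rw [hfac, padicValInt.mul hU (mul_ne_zero hq0 hne), padicValInt.mul hq0 hne, padicValInt_self,
    padicValInt.eq_zero_of_not_dvd hndvd]

lemma padicValInt_U_mul (hab : IsCoprime a b) (ha : 0 < a) (hΔ : 0 < a ^ 2 + 4 * b) {d k : ℕ}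
    (hd : 0 < d) (hk : 0 < k) (h : (q : ℤ) ∣ U a b d) (hpar : q = 2 → Even d ∨ Odd k) :
    padicValInt q (U a b (d * k)) = padicValInt q (U a b d) + padicValNat q k := by
  induction k using Nat.strong_induction_on with
  | _ k ih =>
    by_cases hqk : q ∣ k
    · obtain ⟨l, rfl⟩ := hqk
      have hl : 0 < l := Nat.pos_of_mul_pos_left hk
      have hd2 : q = 2 → Even d := fun h2 => (hpar h2).resolve_right (by simp [h2])
      have hUl : U a b (d * l) ≠ 0 := (U_pos ha hΔ (Nat.mul_pos hd hl)).ne'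
      rw [show d * (q * l) = d * l * q by ring,
        padicValInt_U_mul_self hab (Nat.mul_pos hd hl) (h.trans (U_dvd_mul a b d l)) hUl
          (fun h2 => (hd2 h2).mul_right l),
        ih l (lt_mul_of_one_lt_left hl hq.out.one_lt) hl (fun h2 => .inl (hd2 h2)),
        padicValNat.mul hq.out.ne_zero hl.ne', padicValNat_self]
      ring
    · rw [padicValInt_U_mul_of_not_dvd hab h (U_pos ha hΔ hd).ne' hqk,
        padicValNat.eq_zero_of_not_dvd hqk, add_zero]

lemma padicValInt_le_of_dvd {x y : ℤ} (hy : y ≠ 0) (h : x ∣ y) :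
    padicValInt q x ≤ padicValInt q y :=
  ((padicValInt_dvd_iff _ y).1 ((padicValInt_dvd x).trans h)).resolve_left hy

lemma padicValInt_gcd {x y : ℤ} (hx : x ≠ 0) (hy : y ≠ 0) :
    padicValInt q (x.gcd y : ℤ) = min (padicValInt q x) (padicValInt q y) := by
  have := DFunLike.congr_fun (Nat.factorization_gcd (Int.natAbs_ne_zero.2 hx)
    (Int.natAbs_ne_zero.2 hy)) q
  simpa [Nat.factorization_def _ hq.out, padicValInt, Int.gcd] using this

end valuation

lemma dvd_iff_forall_padicValInt_le {x y : ℤ} (hx : x ≠ 0) (hy : y ≠ 0) :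
    x ∣ y ↔ ∀ q : ℕ, q.Prime → padicValInt q x ≤ padicValInt q y := by
  rw [← Int.natAbs_dvd_natAbs, ← Nat.factorization_le_iff_dvd (Int.natAbs_ne_zero.2 hx)
    (Int.natAbs_ne_zero.2 hy), Finsupp.le_def]
  refine ⟨fun h q hq => ?_, fun h q => ?_⟩
  · simpa [Nat.factorization_def _ hq, padicValInt] using h q
  · by_cases hq : q.Prime
    · simpa [Nat.factorization_def _ hq, padicValInt] using h q hq
    · simp [Nat.factorization_eq_zero_of_not_prime _ hq]

/-- Multiples `2 * p * h`, `p * (2 * h + 1)`, `2 * p * (h + 1)` of `p` have least common multiple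
`2 * p * h * (h + 1) * (2 * h + 1)`. -/
lemma lcm_dvd_of_triple_dvd {p h k : ℕ} (hp : 0 < p) (h₁ : 2 * p * h ∣ k)
    (h₂ : p * (2 * h + 1) ∣ k) (h₃ : 2 * p * (h + 1) ∣ k) :
    2 * p * (h * (h + 1) * (2 * h + 1)) ∣ k := by
  obtain ⟨l, rfl⟩ : p ∣ k := (Dvd.intro _ rfl).trans h₂
  rw [mul_comm 2 p, mul_assoc] at h₁ h₃ ⊢
  rw [Nat.mul_dvd_mul_iff_left hp] at h₁ h₂ h₃ ⊢
  have c₁ : Nat.Coprime (2 * h + 1) (2 * h) := by simp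
  have c₂ : Nat.Coprime h (h + 1) := by simp
  have c₃ : Nat.Coprime (2 * h + 1) (2 * (h + 1)) := by
    rw [show 2 * (h + 1) = (2 * h + 1) + 1 by ring]; simp
  obtain ⟨l, rfl⟩ : 2 ∣ l := (Dvd.intro _ rfl).trans h₁
  rw [Nat.mul_dvd_mul_iff_left two_pos] at h₁ h₃ ⊢
  have c₄ : Nat.Coprime (h * (h + 1)) (2 * h + 1) :=
    Nat.Coprime.mul_left (c₁.coprime_mul_left_right).symm (c₃.coprime_mul_left_right).symm
  refine c₄.mul_dvd_of_dvd_of_dvd (c₂.mul_dvd_of_dvd_of_dvd h₁ h₃) ?_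
  exact (Nat.Coprime.dvd_of_dvd_mul_left (c₁.coprime_mul_right_right) h₂)

lemma padicValInt_triple_le_iff {a b : ℤ} {q : ℕ} [hq : Fact q.Prime] (hab : IsCoprime a b)
    (ha : 0 < a) (hΔ : 0 < a ^ 2 + 4 * b) {p h s t : ℕ} (hp : 0 < p) (hh : 0 < h)
    (hs : 0 < s) (ht : 0 < t)
    (hgt : U a b p ^ 2 * V a b p = (V a b p).gcd ((2 * h + 1 : ℕ) : ℤ) * t) :
    padicValInt q (U a b (2 * p * h) * U a b (p * (2 * h + 1)) * U a b (2 * p * (h + 1))) ≤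
        padicValInt q (U a b (2 * p * (h * (h + 1) * (2 * h + 1)) * s)) ↔
      padicValNat q t ≤ padicValNat q s := by
  have hqp := Nat.prime_iff_prime_int.1 hq.out
  have hUne {k : ℕ} (hk : 0 < k) : U a b k ≠ 0 := (U_pos ha hΔ hk).ne'
  have hUp := hUne hp
  have hVp : V a b p ≠ 0 := (V_pos ha hΔ hp).ne'
  have hU₁ := hUne (show 0 < 2 * p * h by positivity)
  have hU₂ := hUne (show 0 < p * (2 * h + 1) by positivity)
  have hU₃ := hUne (show 0 < 2 * p * (h + 1) by positivity)
  have hUs := hUne (show 0 < 2 * p * (h * (h + 1) * (2 * h + 1)) * s by positivity)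
  have hvt : 2 * padicValInt q (U a b p) + padicValInt q (V a b p) =
      min (padicValInt q (V a b p)) (padicValNat q (2 * h + 1)) + padicValNat q t := by
    have hg : ((V a b p).gcd ((2 * h + 1 : ℕ) : ℤ) : ℤ) ≠ 0 := by
      exact_mod_cast fun h0 => hVp (Int.gcd_eq_zero_iff.1 h0).1
    have := congrArg (padicValInt q) hgt
    rw [sq, padicValInt.mul (mul_ne_zero hUp hUp) hVp, padicValInt.mul hUp hUp,
      padicValInt.mul hg (by exact_mod_cast ht.ne'), padicValInt_gcd hVp (by positivity),
      padicValInt.of_nat, padicValInt.of_nat] at this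
    omega
  rw [padicValInt.mul (mul_ne_zero hU₁ hU₂) hU₃, padicValInt.mul hU₁ hU₂]
  have hg₁₂ : Nat.gcd (2 * p) (p * (2 * h + 1)) = p := by
    rw [mul_comm 2 p, Nat.gcd_mul_left]; simp
  by_cases h2p : (q : ℤ) ∣ U a b (2 * p)
  · have hL := padicValInt_U_mul hab ha hΔ (by positivity : 0 < 2 * p)
      (by positivity : 0 < h * (h + 1) * (2 * h + 1) * s) h2p (fun _ => .inl (by simp))
    rw [← mul_assoc] at hL
    rw [padicValInt_U_mul hab ha hΔ (by positivity) hh h2p (fun _ => .inl (by simp)),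
      padicValInt_U_mul hab ha hΔ (by positivity) (by positivity : 0 < h + 1) h2p
        (fun _ => .inl (by simp)),
      hL, padicValNat.mul (by positivity) hs.ne', padicValNat.mul (by positivity) (by positivity),
      padicValNat.mul hh.ne' (by positivity), U_two_mul, padicValInt.mul hUp hVp]
    by_cases hqU : (q : ℤ) ∣ U a b p
    · have hU := padicValInt_U_mul hab ha hΔ hp (by positivity : 0 < 2 * h + 1) hqU
        (fun _ => .inr (by simp))
      have hmin : padicValInt q (V a b p) = 0 ∨ padicValNat q (2 * h + 1) = 0 := by
        by_cases hqV : (q : ℤ) ∣ V a b p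
        · right
          rw [V_eq, dvd_sub_left (hqU.mul_left a)] at hqV
          have h2 : q ∣ 2 := by
            exact_mod_cast (hqp.dvd_or_dvd hqV).resolve_right (not_dvd_U_succ hab hqU)
          obtain rfl := (Nat.prime_dvd_prime_iff_eq hq.out Nat.prime_two).1 h2
          exact padicValNat.eq_zero_of_not_dvd (by omega)
        · exact .inl (padicValInt.eq_zero_of_not_dvd hqV)
      omega
    · have hU : padicValInt q (U a b (p * (2 * h + 1))) = 0 :=
        padicValInt.eq_zero_of_not_dvd fun h' => hqU (hg₁₂ ▸ dvd_U_gcd hab h2p h')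
      have := padicValInt.eq_zero_of_not_dvd hqU
      omega
  · have hqUV := h2p
    rw [U_two_mul] at hqUV
    have hv₁ := padicValInt.eq_zero_of_not_dvd fun h' => hqUV (Dvd.dvd.mul_right h' (V a b p))
    have hv₂ := padicValInt.eq_zero_of_not_dvd fun h' => hqUV (Dvd.dvd.mul_left h' (U a b p))
    have hdvd {i : ℕ} (hi : i ∣ 2 * p * (h * (h + 1) * (2 * h + 1)) * s) :=
      padicValInt_le_of_dvd (q := q) hUs (U_dvd_of_dvd a b hi)
    have hd₁ := hdvd (i := 2 * p * h) ⟨(h + 1) * (2 * h + 1) * s, by ring⟩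
    have hd₂ := hdvd (i := p * (2 * h + 1)) ⟨2 * h * (h + 1) * s, by ring⟩
    have hd₃ := hdvd (i := 2 * p * (h + 1)) ⟨h * (2 * h + 1) * s, by ring⟩
    have hzero {i j : ℕ} (hij : i.gcd j ∣ 2 * p) :
        padicValInt q (U a b i) = 0 ∨ padicValInt q (U a b j) = 0 := by
      by_contra! hne
      have hi : (q : ℤ) ∣ U a b i := by_contra fun h' => hne.1 (padicValInt.eq_zero_of_not_dvd h')
      have hj : (q : ℤ) ∣ U a b j := by_contra fun h' => hne.2 (padicValInt.eq_zero_of_not_dvd h')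
      exact h2p ((dvd_U_gcd hab hi hj).trans (U_dvd_of_dvd a b hij))
    have hsub {i j : ℕ} (c e : ℤ) (he : (i : ℤ) * c + j * e = 2 * p) : i.gcd j ∣ 2 * p := by
      have : ((i.gcd j : ℕ) : ℤ) ∣ 2 * p := by
        rw [← he]
        exact dvd_add ((Int.natCast_dvd_natCast.2 (Nat.gcd_dvd_left i j)).mul_right c)
          ((Int.natCast_dvd_natCast.2 (Nat.gcd_dvd_right i j)).mul_right e)
      exact_mod_cast this
    have h₁₂ := hzero (hsub (i := 2 * p * h) (j := p * (2 * h + 1)) (-2) 2 (by push_cast; ring))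
    have h₁₃ := hzero (hsub (i := 2 * p * h) (j := 2 * p * (h + 1)) (-1) 1 (by push_cast; ring))
    have h₂₃ := hzero (hsub (i := p * (2 * h + 1)) (j := 2 * p * (h + 1)) (-2) 2
      (by push_cast; ring))
    omega

theorem tau_triple_case4 (a b : ℤ) (hab : IsCoprime a b) (ha : 0 < a)
    (hΔ : 0 < a ^ 2 + 4 * b) (hnd : Nondegenerate a b)
    (n p : ℕ) (hn : 0 < n) (hp : p.Prime) (hp3 : 3 ≤ p)
    (hpn : p ∣ n) (heven : Even n) :
    (tau a b (U a b n * U a b (n + p) * U a b (n + 2 * p)) : ℤ) =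
      ((n * (n + p) * (n + 2 * p) : ℤ) / (2 * p ^ 2 : ℕ)) *
        (U a b p ^ 2 * V a b p / (Int.gcd (V a b p) (((n + p) / p : ℕ) : ℤ) : ℤ)) := by
  have hp0 : 0 < p := hp.pos
  have hcop : Nat.Coprime 2 p := (Nat.coprime_primes Nat.prime_two hp).2 (by omega)
  obtain ⟨h, rfl⟩ : 2 * p ∣ n := hcop.mul_dvd_of_dvd_of_dvd heven.two_dvd hpn
  have hh : 0 < h := Nat.pos_of_mul_pos_left hn
  have hm : (2 * p * h + p) / p = 2 * h + 1 := by
    rw [show 2 * p * h + p = p * (2 * h + 1) by ring, Nat.mul_div_cancel_left _ hp0]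
  rw [hm, show 2 * p * h + p = p * (2 * h + 1) by ring,
    show 2 * p * h + 2 * p = 2 * p * (h + 1) by ring]
  have hVp := V_pos ha hΔ hp0
  have hUp := U_pos ha hΔ hp0
  have hg : 0 < ((V a b p).gcd ((2 * h + 1 : ℕ) : ℤ) : ℤ) := by
    exact_mod_cast Int.gcd_pos_of_ne_zero_left _ hVp.ne'
  obtain ⟨t, ht⟩ : ((V a b p).gcd ((2 * h + 1 : ℕ) : ℤ) : ℤ) ∣ U a b p ^ 2 * V a b p :=
    (Int.gcd_dvd_left ..).mul_left _
  have ht0 : 0 < t := pos_of_mul_pos_right (ht ▸ by positivity) hg.le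
  lift t to ℕ using ht0.le
  have ht0 : 0 < t := by exact_mod_cast ht0
  rw [ht, Int.mul_ediv_cancel_left _ hg.ne',
    show ((2 * p * h : ℕ) * ((2 * p * h : ℕ) + p) * ((2 * p * h : ℕ) + 2 * p) : ℤ) =
      ((2 * p ^ 2 : ℕ) : ℤ) * (2 * p * (h * (h + 1) * (2 * h + 1)) : ℕ) by push_cast; ring,
    Int.mul_ediv_cancel_left _ (by positivity)]
  norm_cast
  have hL : 0 < 2 * p * (h * (h + 1) * (2 * h + 1)) := by positivity
  have hUpos {k : ℕ} (hk : 0 < k) : 0 < U a b k := U_pos ha hΔ hk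
  have hM : U a b (2 * p * h) * U a b (p * (2 * h + 1)) * U a b (2 * p * (h + 1)) ≠ 0 :=
    mul_ne_zero (mul_ne_zero (hUpos (by positivity)).ne' (hUpos (by positivity)).ne')
      (hUpos (by positivity)).ne'
  have key {s : ℕ} (hs : 0 < s) :
      U a b (2 * p * h) * U a b (p * (2 * h + 1)) * U a b (2 * p * (h + 1)) ∣
        U a b (2 * p * (h * (h + 1) * (2 * h + 1)) * s) ↔ t ∣ s := by
    rw [dvd_iff_forall_padicValInt_le hM (hUpos (Nat.mul_pos hL hs)).ne',
      ← Int.natCast_dvd_natCast, dvd_iff_forall_padicValInt_le (by positivity) (by positivity)]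
    refine forall₂_congr fun q hq => ?_
    have := Fact.mk hq
    rw [padicValInt.of_nat, padicValInt.of_nat]
    exact padicValInt_triple_le_iff hab ha hΔ hp0 hh hs ht0 ht
  have hleast : IsLeast {k : ℕ | 0 < k ∧
      U a b (2 * p * h) * U a b (p * (2 * h + 1)) * U a b (2 * p * (h + 1)) ∣ U a b k}
      (2 * p * (h * (h + 1) * (2 * h + 1)) * t) := by
    refine ⟨⟨Nat.mul_pos hL ht0, (key ht0).2 dvd_rfl⟩, ?_⟩
    rintro k ⟨hk, hdvd⟩
    have hrank {i : ℕ} (hi : p ≤ i) : U a b i ∣ U a b k → i ∣ k :=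
      dvd_of_U_dvd hab ha hΔ hnd.1 (hp3.trans hi)
    obtain ⟨s, rfl⟩ := lcm_dvd_of_triple_dvd (h := h) hp0
      (hrank (by nlinarith) (((Dvd.intro _ rfl).trans (Dvd.intro _ rfl)).trans hdvd))
      (hrank (by nlinarith) (((Dvd.intro_left _ rfl).trans (Dvd.intro _ rfl)).trans hdvd))
      (hrank (by nlinarith) ((Dvd.intro_left _ rfl).trans hdvd))
    have hs : 0 < s := Nat.pos_of_mul_pos_left hk
    exact Nat.mul_le_mul_left _ (Nat.le_of_dvd hs ((key hs).1 hdvd))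
  exact hleast.csInf_eq
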